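/- arXiv:1005.1033 — 3 statements merged into one kernel-verified Lean document; each statement's English description precedes it below -/
import Mathlib

section
/- For all real numbers u and v, (1/(2√3·π)) · ∫_{ℝ²} exp((1 + iu)·x + (1 + iv)·y − √3·√(x² + y²)) dx dy = ((u − i)² + (v − i)² + 3)^(−3/2), where the complex power is taken with the principal branch. -/
open MeasureTheory Complex

lemma w_surj (c r : ℝ) (hc : 0 < c) (hr : 0 < r) :
    (fun t : ℝ => c * t - r / t) '' Set.Ioi 0 = Set.univ := by
  apply Set.eq_univ_of_forall
  intro w
  have hs : |w| < Real.sqrt (w ^ 2 + 4 * c * r) := by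
    apply Real.lt_sqrt_of_sq_lt
    rw [sq_abs]
    have : 0 < c * r := by positivity
    linarith
  have hq : Real.sqrt (w ^ 2 + 4 * c * r) ^ 2 = w ^ 2 + 4 * c * r := Real.sq_sqrt (by positivity)
  have hp : 0 < w + Real.sqrt (w ^ 2 + 4 * c * r) := by
    have := neg_abs_le w
    linarith
  refine ⟨(w + Real.sqrt (w ^ 2 + 4 * c * r)) / (2 * c), ?_, ?_⟩
  · simp only [Set.mem_Ioi]; positivity
  · generalize Real.sqrt (w ^ 2 + 4 * c * r) = q at *
    simp only
    field_simp
    nlinarith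

lemma w_inj (c r : ℝ) (hc : 0 < c) (hr : 0 < r) :
    Set.InjOn (fun t : ℝ => c * t - r / t) (Set.Ioi 0) := by
  intro x hx y hy h
  simp only [Set.mem_Ioi] at hx hy h
  have h2 : (x - y) * (c + r / (x * y)) = 0 := by
    have : (x - y) * (c + r / (x * y)) = (c * x - r / x) - (c * y - r / y) := by
      field_simp; ring
    rw [this, h, sub_self]
  have h3 : c + r / (x * y) ≠ 0 := by positivity
  rcases mul_eq_zero.1 h2 with h | h
  · linarith
  · exact absurd h h3

lemma w_deriv (c r t : ℝ) (ht : 0 < t) :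
    HasDerivAt (fun t : ℝ => c * t - r / t) (c + r / t ^ 2) t := by
  have h1 := ((hasDerivAt_id t).const_mul c).sub ((hasDerivAt_inv ht.ne').const_mul r)
  convert! h1 using 1
  simp; ring

lemma inv_image (k : ℝ) (hk : 0 < k) :
    (fun t : ℝ => k / t) '' Set.Ioi 0 = Set.Ioi 0 := by
  ext y
  simp only [Set.mem_image, Set.mem_Ioi]
  constructor
  · rintro ⟨x, hx, rfl⟩; positivity
  · intro hy
    exact ⟨k / y, by positivity, by field_simp⟩

lemma cs (c r : ℝ) (hc : 0 < c) (hr : 0 < r) :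
    IntegrableOn (fun t : ℝ => Real.exp (-(c * t - r / t) ^ 2)) (Set.Ioi 0) ∧
    ∫ t in Set.Ioi (0 : ℝ), Real.exp (-(c * t - r / t) ^ 2) = √Real.pi / (2 * c) := by
  have hm : MeasurableSet (Set.Ioi (0 : ℝ)) := measurableSet_Ioi
  have hd : ∀ x ∈ Set.Ioi (0:ℝ), HasDerivWithinAt (fun t : ℝ => c * t - r / t) (c + r / x ^ 2)
      (Set.Ioi 0) x := fun x hx => (w_deriv c r x hx).hasDerivWithinAt
  have h1 := integral_image_eq_integral_abs_deriv_smul hm hd (w_inj c r hc hr)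
    (fun w => Real.exp (-w ^ 2))
  have g := integral_gaussian 1
  have gi := integrable_exp_neg_mul_sq (b := 1) one_pos
  simp only [neg_mul, one_mul, div_one] at g gi
  have h1i := integrableOn_image_iff_integrableOn_abs_deriv_smul hm hd (w_inj c r hc hr)
    (fun w => Real.exp (-w ^ 2))
  rw [w_surj c r hc hr] at h1 h1i
  rw [integrableOn_univ] at h1i
  have h1i' := h1i.1 gi
  rw [setIntegral_univ, g] at h1
  have hA : IntegrableOn (fun t : ℝ => Real.exp (-(c * t - r / t) ^ 2)) (Set.Ioi 0) := by
    refine Integrable.mono' (h1i'.const_mul (1 / c)) ?_ ?_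
    · exact Measurable.aestronglyMeasurable (by fun_prop)
    · filter_upwards [ae_restrict_mem hm] with t ht
      simp only [Set.mem_Ioi] at ht
      rw [Real.norm_of_nonneg (by positivity), smul_eq_mul, abs_of_pos (by positivity), ← mul_assoc]
      apply le_mul_of_one_le_left (by positivity)
      rw [mul_add, one_div_mul_cancel hc.ne']
      have : 0 ≤ 1 / c * (r / t ^ 2) := by positivity
      linarith
  refine ⟨hA, ?_⟩
  have hk : 0 < r / c := by positivity
  have hd2 : ∀ x ∈ Set.Ioi (0:ℝ), HasDerivWithinAt (fun t : ℝ => (r / c) / t) (-((r / c) / x ^ 2))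
      (Set.Ioi 0) x := by
    intro x hx
    have := ((hasDerivAt_inv (ne_of_gt hx)).const_mul (r / c)).hasDerivWithinAt (s := Set.Ioi 0)
    convert! this using 1
    ring
  have hi2 : Set.InjOn (fun t : ℝ => (r / c) / t) (Set.Ioi 0) := by
    intro x hx y hy h
    simp only [Set.mem_Ioi] at hx hy h
    field_simp at h
    exact h.symm
  have h2 := integral_image_eq_integral_abs_deriv_smul hm hd2 hi2
    (fun t => Real.exp (-(c * t - r / t) ^ 2))
  rw [inv_image _ hk] at h2
  have h3 : ∫ t in Set.Ioi (0 : ℝ), |-((r / c) / t ^ 2)| • Real.exp (-(c * (r / c / t) - r / (r / c / t)) ^ 2)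
      = ∫ t in Set.Ioi (0 : ℝ), (1 / c) * (|c + r / t ^ 2| • Real.exp (-(c * t - r / t) ^ 2)
        - c * Real.exp (-(c * t - r / t) ^ 2)) := by
    apply setIntegral_congr_fun hm
    intro t ht
    simp only [Set.mem_Ioi] at ht
    simp only [smul_eq_mul]
    rw [abs_neg, abs_of_pos (by positivity), abs_of_pos (by positivity)]
    have : -(c * (r / c / t) - r / (r / c / t)) ^ 2 = -(c * t - r / t) ^ 2 := by
      field_simp; ring
    rw [this]
    field_simp
    ring
  rw [h3, integral_const_mul, integral_sub h1i' (hA.const_mul c), ← h1, integral_const_mul] at h2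
  field_simp at h2 ⊢
  linarith

lemma subord (c r : ℝ) (hc : 0 < c) (hr : 0 < r) :
    ∫ t in Set.Ioi (0 : ℝ), Real.exp (-c ^ 2 * t ^ 2 - r ^ 2 / (4 * t ^ 2)) =
      √Real.pi / (2 * c) * Real.exp (-c * r) := by
  rw [← (cs c (r / 2) hc (by positivity)).2, ← integral_mul_const]
  apply setIntegral_congr_fun measurableSet_Ioi
  intro t ht
  simp only [Set.mem_Ioi] at ht
  simp only
  rw [← Real.exp_add]
  congr 1
  field_simp
  ring

lemma gauss1 (a : ℂ) (t : ℝ) (ht : 0 < t) :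
    Integrable (fun x : ℝ => cexp (a * x - x ^ 2 / (4 * t ^ 2))) ∧
    ∫ x : ℝ, cexp (a * x - x ^ 2 / (4 * t ^ 2)) = 2 * √Real.pi * t * cexp (a ^ 2 * t ^ 2) := by
  have hb : (((-1 / (4 * t ^ 2) : ℝ)) : ℂ).re < 0 := by
    rw [ofReal_re]
    apply div_neg_of_neg_of_pos <;> [norm_num; positivity]
  have ht' : (t : ℂ) ≠ 0 := by exact_mod_cast ht.ne'
  have e : (fun x : ℝ => cexp (a * x - x ^ 2 / (4 * t ^ 2))) =
      fun x : ℝ => cexp ((((-1 / (4 * t ^ 2) : ℝ)) : ℂ) * x ^ 2 + a * x + 0) := by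
    ext x
    congr 1
    push_cast
    ring
  rw [e]
  refine ⟨integrable_cexp_quadratic' hb a 0, ?_⟩
  rw [integral_cexp_quadratic hb]
  have h1 : (Real.pi : ℂ) / -(((-1 / (4 * t ^ 2) : ℝ)) : ℂ) = ((Real.pi * (2 * t) ^ 2 : ℝ) : ℂ) := by
    push_cast; field_simp; ring
  have h2 : ((Real.pi * (2 * t) ^ 2 : ℝ) : ℂ) ^ (1 / 2 : ℂ) = 2 * √Real.pi * t := by
    have := (Complex.ofReal_cpow (x := Real.pi * (2 * t) ^ 2) (by positivity) (1 / 2)).symm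
    push_cast at this ⊢
    rw [this, ← Real.sqrt_eq_rpow, Real.sqrt_mul (by positivity), Real.sqrt_sq (by positivity)]
    push_cast; ring
  rw [h1, h2]
  congr 2
  push_cast
  field_simp
  ring

lemma gauss2 (a b : ℂ) (k : ℝ) (t : ℝ) (ht : 0 < t) :
    Integrable (fun p : ℝ × ℝ => cexp (a * p.1 + b * p.2) *
      (Real.exp (-k * t ^ 2 - (p.1 ^ 2 + p.2 ^ 2) / (4 * t ^ 2)) : ℂ)) ∧
    ∫ p : ℝ × ℝ, cexp (a * p.1 + b * p.2) *
      (Real.exp (-k * t ^ 2 - (p.1 ^ 2 + p.2 ^ 2) / (4 * t ^ 2)) : ℂ) =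
      4 * Real.pi * t ^ 2 * cexp (-(k - a ^ 2 - b ^ 2) * t ^ 2) := by
  have e : (fun p : ℝ × ℝ => cexp (a * p.1 + b * p.2) *
      (Real.exp (-k * t ^ 2 - (p.1 ^ 2 + p.2 ^ 2) / (4 * t ^ 2)) : ℂ)) =
      fun p : ℝ × ℝ => cexp (-k * t ^ 2) * (cexp (a * p.1 - p.1 ^ 2 / (4 * t ^ 2)) *
        cexp (b * p.2 - p.2 ^ 2 / (4 * t ^ 2))) := by
    ext p
    push_cast
    rw [← Complex.exp_add, ← Complex.exp_add, ← Complex.exp_add]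
    congr 1
    ring
  rw [e]
  refine ⟨((gauss1 a t ht).1.mul_prod (gauss1 b t ht).1).const_mul _, ?_⟩
  rw [integral_const_mul, Measure.volume_eq_prod, integral_prod_mul (fun x : ℝ => cexp (a * x - x ^ 2 / (4 * t ^ 2)))
    (fun x : ℝ => cexp (b * x - x ^ 2 / (4 * t ^ 2))), (gauss1 a t ht).2, (gauss1 b t ht).2]
  have h : ((√Real.pi : ℝ) : ℂ) ^ 2 = Real.pi := by
    rw [← ofReal_pow, Real.sq_sqrt Real.pi_pos.le]
  have h2 : cexp (-(k - a ^ 2 - b ^ 2) * t ^ 2) = cexp (-k * t ^ 2) * cexp (a ^ 2 * t ^ 2) * cexp (b ^ 2 * t ^ 2) := by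
    rw [← Complex.exp_add, ← Complex.exp_add]
    congr 1
    ring
  rw [h2, ← h]
  ring


lemma gam_int (D : ℂ) (hD : 0 < D.re) (n : ℕ) :
    IntegrableOn (fun t : ℝ => (t : ℂ) ^ n * cexp (-D * t ^ 2)) (Set.Ioi 0) := by
  have h := integrableOn_rpow_mul_exp_neg_mul_sq hD (s := n)
    (by have : (0 : ℝ) ≤ n := by positivity
        linarith)
  refine Integrable.mono' h (Measurable.aestronglyMeasurable (by fun_prop)) ?_
  filter_upwards [ae_restrict_mem measurableSet_Ioi] with t ht
  simp only [Set.mem_Ioi] at ht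
  rw [norm_mul, norm_pow, Complex.norm_real, Real.norm_of_nonneg ht.le, Complex.norm_exp,
    Real.rpow_natCast]
  apply le_of_eq
  congr 2
  rw [← ofReal_pow, Complex.re_mul_ofReal]
  simp

lemma gam (D : ℂ) (hD : 0 < D.re) :
    ∫ t in Set.Ioi (0 : ℝ), (t : ℂ) ^ 2 * cexp (-D * t ^ 2) = √Real.pi / 4 * D ^ (-(3 / 2) : ℂ) := by
  have hD0 : D ≠ 0 := by rintro rfl; simp at hD
  have i0 := gam_int D hD 0
  have i1 := gam_int D hD 1
  have i2 := gam_int D hD 2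
  simp only [pow_zero, one_mul, pow_one] at i0 i1
  have hd : ∀ x : ℝ, HasDerivAt (fun t : ℝ => (t : ℂ) * cexp (-D * t ^ 2))
      (cexp (-D * x ^ 2) - 2 * D * ((x : ℂ) ^ 2 * cexp (-D * x ^ 2))) x := by
    intro x
    have h : HasDerivAt (fun z : ℂ => z * cexp (-D * z ^ 2))
      (cexp (-D * x ^ 2) - 2 * D * ((x : ℂ) ^ 2 * cexp (-D * x ^ 2))) (x : ℂ) := by
      have := (hasDerivAt_id (x : ℂ)).mul (((hasDerivAt_pow 2 (x : ℂ)).const_mul (-D)).cexp)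
      convert! this using 1
      simp; ring
    exact h.comp_ofReal
  have i' := i0.sub (i2.const_mul (2 * D))
  have ht := tendsto_zero_of_hasDerivAt_of_integrableOn_Ioi (a := 0) (fun x _ => hd x) i' i1
  have h := integral_Ioi_of_hasDerivAt_of_tendsto' (a := 0) (fun x _ => hd x) i' ht
  rw [integral_sub i0 (i2.const_mul (2 * D)), integral_const_mul, integral_gaussian_complex_Ioi hD] at h
  have hpi : ((Real.pi : ℂ) / D) ^ (1 / 2 : ℂ) = √Real.pi * D ^ (-(1 / 2) : ℂ) := by
    have harg : D.arg ≠ Real.pi := by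
      intro hh
      rw [Complex.arg_eq_pi_iff] at hh
      linarith [hh.1]
    rw [div_eq_mul_inv, Complex.cpow_def_of_ne_zero (by simp [hD0, Real.pi_ne_zero]),
      Complex.log_ofReal_mul Real.pi_pos (inv_ne_zero hD0), add_mul, Complex.exp_add,
      ← Complex.cpow_def_of_ne_zero (inv_ne_zero hD0), Complex.inv_cpow _ _ harg, Complex.cpow_neg]
    congr 1
    rw [Real.sqrt_eq_rpow, Complex.ofReal_cpow Real.pi_pos.le,
      Complex.cpow_def_of_ne_zero (by simp [Real.pi_ne_zero]), Complex.ofReal_log Real.pi_pos.le]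
    simp
  have hD3 : D * D ^ (-(3 / 2) : ℂ) = D ^ (-(1 / 2) : ℂ) := by
    conv_lhs => enter [1]; rw [← Complex.cpow_one D]
    rw [← Complex.cpow_add _ _ hD0]
    norm_num
  rw [hpi, ← hD3] at h
  simp only [ofReal_zero, zero_mul, sub_zero] at h
  apply mul_left_cancel₀ (mul_ne_zero two_ne_zero hD0)
  linear_combination -h

lemma fub (u v : ℝ) :
    Integrable (fun q : (ℝ × ℝ) × ℝ => cexp ((1 + I * u) * q.1.1 + (1 + I * v) * q.1.2) *
      (Real.exp (-3 * q.2 ^ 2 - (q.1.1 ^ 2 + q.1.2 ^ 2) / (4 * q.2 ^ 2)) : ℂ))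
      ((volume : Measure (ℝ × ℝ)).prod (volume.restrict (Set.Ioi (0 : ℝ)))) := by
  rw [integrable_prod_iff' (Measurable.aestronglyMeasurable (by fun_prop))]
  constructor
  · filter_upwards [ae_restrict_mem measurableSet_Ioi] with t ht
    have := (gauss2 (1 + I * u) (1 + I * v) 3 t ht).1
    simpa using this
  · have h : IntegrableOn (fun t : ℝ => 4 * Real.pi * (t ^ (2 : ℝ) * Real.exp (-1 * t ^ 2))) (Set.Ioi 0) :=
      (integrableOn_rpow_mul_exp_neg_mul_sq one_pos (by norm_num)).const_mul _
    refine Integrable.congr h ?_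
    filter_upwards [ae_restrict_mem measurableSet_Ioi] with t ht
    have e := (gauss2 1 1 3 t ht).2
    apply Complex.ofReal_injective
    rw [← integral_complex_ofReal]
    have e2 : ∀ p : ℝ × ℝ, ((‖cexp ((1 + I * u) * p.1 + (1 + I * v) * p.2) *
      (Real.exp (-3 * t ^ 2 - (p.1 ^ 2 + p.2 ^ 2) / (4 * t ^ 2)) : ℂ)‖ : ℝ) : ℂ) =
      cexp (1 * p.1 + 1 * p.2) *
      (Real.exp (-3 * t ^ 2 - (p.1 ^ 2 + p.2 ^ 2) / (4 * t ^ 2)) : ℂ) := by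
      intro p
      rw [norm_mul, Complex.norm_exp, Complex.norm_real, Real.norm_of_nonneg (Real.exp_pos _).le]
      push_cast
      congr 2
      simp
    simp only [e2]
    rw [e]
    push_cast
    norm_num
    ring

theorem pinned_fourier_transform_G (u v : ℝ) :
    (1 / (2 * (Real.sqrt 3 : ℂ) * (Real.pi : ℂ))) *
      ∫ p : ℝ × ℝ,
        Complex.exp ((1 + Complex.I * u) * (p.1 : ℂ) + (1 + Complex.I * v) * (p.2 : ℂ) -
            (Real.sqrt 3 : ℂ) * (Real.sqrt (p.1 ^ 2 + p.2 ^ 2) : ℂ)) =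
    (((u : ℂ) - Complex.I) ^ 2 + ((v : ℂ) - Complex.I) ^ 2 + 3) ^ (-(3 / 2) : ℂ) := by
  have s3 : (0 : ℝ) < √3 := by positivity
  have s3' : ((√3 : ℝ) : ℂ) ≠ 0 := by exact_mod_cast s3.ne'
  have sp : ((√Real.pi : ℝ) : ℂ) ≠ 0 := by
    have : 0 < √Real.pi := Real.sqrt_pos.2 Real.pi_pos
    exact_mod_cast this.ne'
  have hp : (Real.pi : ℂ) ≠ 0 := by exact_mod_cast Real.pi_ne_zero
  have hsp : ((√Real.pi : ℝ) : ℂ) ^ 2 = Real.pi := by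
    rw [← ofReal_pow, Real.sq_sqrt Real.pi_pos.le]
  have key : ∫ p : ℝ × ℝ,
        Complex.exp ((1 + Complex.I * u) * (p.1 : ℂ) + (1 + Complex.I * v) * (p.2 : ℂ) -
            (Real.sqrt 3 : ℂ) * (Real.sqrt (p.1 ^ 2 + p.2 ^ 2) : ℂ)) =
      ∫ p : ℝ × ℝ, (2 * √3 / √Real.pi : ℂ) * ∫ t in Set.Ioi (0 : ℝ),
        cexp ((1 + I * u) * p.1 + (1 + I * v) * p.2) *
        (Real.exp (-3 * t ^ 2 - (p.1 ^ 2 + p.2 ^ 2) / (4 * t ^ 2)) : ℂ) := by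
    apply integral_congr_ae
    have h0 : ∀ᵐ p : ℝ × ℝ, p ≠ 0 := by
      rw [Measure.volume_eq_prod]
      exact Measure.ae_ne _ 0
    filter_upwards [h0] with p hp0
    have hr : 0 < p.1 ^ 2 + p.2 ^ 2 := by
      by_contra hcon
      apply hp0
      ext
      · simp only [Prod.fst_zero]; nlinarith [sq_nonneg p.1, sq_nonneg p.2]
      · simp only [Prod.snd_zero]; nlinarith [sq_nonneg p.1, sq_nonneg p.2]
    have hsub := subord (√3) (√(p.1 ^ 2 + p.2 ^ 2)) s3 (Real.sqrt_pos.2 hr)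
    rw [Real.sq_sqrt hr.le, Real.sq_sqrt (by norm_num)] at hsub
    rw [integral_const_mul, integral_complex_ofReal, hsub, sub_eq_add_neg, Complex.exp_add]
    push_cast
    field_simp
  rw [key, integral_const_mul, integral_integral_swap (fub u v)]
  set D : ℂ := ((u : ℂ) - Complex.I) ^ 2 + ((v : ℂ) - Complex.I) ^ 2 + 3 with hDdef
  have hDeq : D = 3 - (1 + I * u) ^ 2 - (1 + I * v) ^ 2 := by
    rw [hDdef]
    linear_combination (2 + (u : ℂ) ^ 2 + (v : ℂ) ^ 2) * I_sq
  have hD : 0 < D.re := by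
    rw [hDdef]
    simp [pow_two]
    nlinarith [mul_self_nonneg u, mul_self_nonneg v]
  have e : ∫ t in Set.Ioi (0 : ℝ), ∫ p : ℝ × ℝ, cexp ((1 + I * u) * p.1 + (1 + I * v) * p.2) *
        (Real.exp (-3 * t ^ 2 - (p.1 ^ 2 + p.2 ^ 2) / (4 * t ^ 2)) : ℂ) =
      ∫ t in Set.Ioi (0 : ℝ), 4 * Real.pi * ((t : ℂ) ^ 2 * cexp (-D * t ^ 2)) := by
    apply setIntegral_congr_fun measurableSet_Ioi
    intro t ht
    have := (gauss2 (1 + I * u) (1 + I * v) 3 t ht).2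
    simp only
    rw [this, hDeq]
    push_cast
    ring
  rw [e, integral_const_mul, gam D hD]
  field_simp
end

section
/- For all real numbers u and v, (1/(2π)) · ∫_{ℝ²} exp((1/4)·((1 + 4iu)·x + (1 + 4iv)·y − √3·√(3x² − 2xy + 3y²))) / √(3x² − 2xy + 3y²) dx dy = ((u − i)(3u + i) + (v − i)(3v + i) + 2uv − 1)^(−1/2), where the complex power is taken with the principal branch. -/
open MeasureTheory Complex

lemma aux_alg (c q U V : ℝ) (S : ℂ) (hq : 0 < q) (hc : q < c) (hS : 0 < S.re)
    (hS2 : S ^ 2 = (c:ℂ)^2 - ((q:ℂ) + U * I)^2 - (V * I)^2) :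
    ‖((q + V : ℝ) : ℂ) + U * I‖ < ‖(c:ℂ) + S‖ := by
  have h1 := congrArg Complex.re hS2
  have h2 := congrArg Complex.im hS2
  simp [pow_two] at h1 h2
  have h3 : V ≤ S.re := by
    by_contra! hlt
    nlinarith [sq_nonneg S.im, sq_nonneg U]
  rw [← sq_lt_sq₀ (norm_nonneg _) (norm_nonneg _), ← Complex.normSq_eq_norm_sq,
    ← Complex.normSq_eq_norm_sq]
  simp [Complex.normSq_apply]
  nlinarith [mul_pos hq hS, sq_nonneg S.im, mul_pos (sub_pos.2 hc) hS, mul_le_mul_of_nonneg_left h3 hq.le]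

lemma aux_theta (α β : ℂ) (ha : ‖α‖ < 1) (hb : ‖β‖ < 1) :
    ∫ θ in (-Real.pi)..Real.pi, 1 / ((1 - α * exp (θ * I)) * (1 - β * exp (-(θ * I)))) =
      2 * Real.pi / (1 - α * β) := by
  have hsl : ∀ (γ w : ℂ), ‖γ‖ < 1 → ‖w‖ = 1 → 1 - γ * w ∈ slitPlane := by
    intro γ w h1 h2
    left
    have : (γ * w).re ≤ ‖γ * w‖ := Complex.re_le_norm _
    rw [norm_mul, h2] at this
    simp only [sub_re, one_re]
    linarith
  have n1 : ∀ θ : ℝ, ‖exp (θ * I)‖ = 1 := fun θ => Complex.norm_exp_ofReal_mul_I θ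
  have n2 : ∀ θ : ℝ, ‖exp (-(θ * I))‖ = 1 := fun θ => by
    rw [Complex.exp_neg, norm_inv, n1, inv_one]
  have hab : 1 - α * β ≠ 0 := by
    intro h
    have : ‖α * β‖ = 1 := by rw [← sub_eq_zero.1 h]; simp
    rw [norm_mul] at this
    nlinarith [norm_nonneg α, norm_nonneg β]
  have hcont : Continuous fun θ : ℝ => 1 / ((1 - α * exp (θ * I)) * (1 - β * exp (-(θ * I)))) := by
    apply Continuous.div continuous_const (by fun_prop)
    intro θ
    exact mul_ne_zero (slitPlane_ne_zero (hsl _ _ ha (n1 θ))) (slitPlane_ne_zero (hsl _ _ hb (n2 θ)))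
  have key : ∀ θ ∈ Set.uIcc (-Real.pi) Real.pi, HasDerivAt
      (fun θ : ℝ => ((θ:ℂ) + I * log (1 - α * exp (θ * I)) - I * log (1 - β * exp (-(θ * I)))) / (1 - α * β))
      (1 / ((1 - α * exp (θ * I)) * (1 - β * exp (-(θ * I))))) θ := by
    intro θ _
    have h0 : HasDerivAt (fun θ : ℝ => (θ : ℂ)) 1 θ := Complex.ofRealCLM.hasDerivAt
    have e1 := (((h0.mul_const I).cexp.const_mul α).const_sub 1).clog_real (hsl _ _ ha (n1 θ))
    have e2 := ((((h0.mul_const I).neg).cexp.const_mul β).const_sub 1).clog_real (hsl _ _ hb (n2 θ))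
    refine HasDerivAt.congr_deriv (((h0.add (e1.const_mul I)).sub (e2.const_mul I)).div_const (1 - α * β)) ?_
    have z1 := slitPlane_ne_zero (hsl _ _ ha (n1 θ))
    have z2 := slitPlane_ne_zero (hsl _ _ hb (n2 θ))
    have hz : exp (θ * I) * exp (-(θ * I)) = 1 := by rw [← Complex.exp_add]; simp
    change (1 + I * (-(α * (exp (θ * I) * (1 * I))) / (1 - α * exp (θ * I))) -
        I * (-(β * (exp (-(θ * I)) * -(1 * I))) / (1 - β * exp (-(θ * I))))) / (1 - α * β) =
      1 / ((1 - α * exp (θ * I)) * (1 - β * exp (-(θ * I))))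
    generalize exp (θ * I) = z at *
    generalize exp (-(θ * I)) = w at *
    field_simp
    linear_combination (-(α * β)) * hz + (-α*z*(1-β*w) - β*w*(1-α*z)) * I_sq
  rw [intervalIntegral.integral_eq_sub_of_hasDerivAt key (hcont.intervalIntegrable _ _)]
  have p1 : exp (((-Real.pi : ℝ) : ℂ) * I) = -1 := by
    push_cast; rw [neg_mul, Complex.exp_neg, exp_pi_mul_I]; norm_num
  have p2 : exp (-(((-Real.pi : ℝ) : ℂ) * I)) = -1 := by
    push_cast; rw [neg_mul, neg_neg, exp_pi_mul_I]
  have p3 : exp (-((Real.pi : ℂ) * I)) = -1 := by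
    rw [Complex.exp_neg, exp_pi_mul_I]; norm_num
  rw [p1, p2, p3, exp_pi_mul_I]
  push_cast
  ring

lemma aux_theta2 (c q U V : ℝ) (S : ℂ) (hq : 0 < q) (hc : q < c) (hS : 0 < S.re)
    (hS2 : S ^ 2 = (c:ℂ)^2 - ((q:ℂ) + U * I)^2 - (V * I)^2) :
    ∫ θ in (-Real.pi)..Real.pi, 1 / ((c:ℂ) - ((q:ℂ) + U * I) * Real.cos θ - V * I * Real.sin θ) =
      2 * Real.pi / S := by
  have h1 := aux_alg c q U V S hq hc hS hS2
  have h2 := aux_alg c q U (-V) S hq hc hS (by rw [hS2]; push_cast; ring)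
  have hpos : (c:ℂ) + S ≠ 0 := by
    rw [← norm_pos_iff]; exact (norm_nonneg _).trans_lt h1
  have hS0 : S ≠ 0 := by rintro rfl; simp at hS
  set P : ℂ := ((q + V : ℝ) : ℂ) + U * I with hP
  set R : ℂ := ((q + -V : ℝ) : ℂ) + U * I with hR
  have hPR : S ^ 2 = c^2 - P * R := by
    rw [hS2, hP, hR]; push_cast; linear_combination (-V^2 : ℂ) * I_sq
  have ha : ‖P / (c + S)‖ < 1 := by
    rw [norm_div, div_lt_one (norm_pos_iff.2 hpos)]; exact h1
  have hb : ‖R / (c + S)‖ < 1 := by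
    rw [norm_div, div_lt_one (norm_pos_iff.2 hpos)]; exact h2
  have := aux_theta _ _ ha hb
  have e : ∀ θ : ℝ, 1 / ((c:ℂ) - ((q:ℂ) + U * I) * Real.cos θ - V * I * Real.sin θ) =
      (2 / (c + S)) * (1 / ((1 - P / (c + S) * exp (θ * I)) * (1 - R / (c + S) * exp (-(θ * I))))) := by
    intro θ
    have hz : exp (θ * I) * exp (-(θ * I)) = 1 := by rw [← Complex.exp_add]; simp
    have hd : (c:ℂ) - ((q:ℂ) + U * I) * Real.cos θ - V * I * Real.sin θ = 
      ((c + S) / 2) * ((1 - P / (c + S) * exp (θ * I)) * (1 - R / (c + S) * exp (-(θ * I)))) := by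
      have : (c:ℂ) - ((q:ℂ) + U * I) * Real.cos θ - V * I * Real.sin θ = 
         c - (P * exp (θ * I) + R * exp (-(θ * I))) / 2 := by
        rw [← neg_mul, exp_mul_I, exp_mul_I, Complex.cos_neg, Complex.sin_neg, hP, hR]
        push_cast
        ring
      rw [this]
      generalize exp (θ * I) = z at *
      generalize exp (-(θ * I)) = w at *
      field_simp
      linear_combination (-P*R) * hz - hPR
    rw [hd, one_div, mul_inv, inv_div, one_div]
  simp_rw [e]
  rw [intervalIntegral.integral_const_mul, this]
  have : 1 - P / (c + S) * (R / (c + S)) = 2 * S / (c + S) := by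
    field_simp
    linear_combination -hPR
  rw [this]
  field_simp


lemma aux_polar (c q U V : ℝ) (S : ℂ) (hq : 0 < q) (hc : q < c) (hS : 0 < S.re)
    (hS2 : S ^ 2 = (c:ℂ)^2 - ((q:ℂ) + U * I)^2 - (V * I)^2) :
    ∫ p : ℝ × ℝ, exp (((q:ℂ) + U * I) * p.1 + V * I * p.2 - c * Real.sqrt (p.1 ^ 2 + p.2 ^ 2)) /
      (Real.sqrt (p.1 ^ 2 + p.2 ^ 2) : ℂ) = 2 * Real.pi / S := by
  rw [← integral_comp_polarCoord_symm]
  set a : ℝ → ℂ := fun θ => -((c:ℂ) - ((q:ℂ) + U * I) * Real.cos θ - V * I * Real.sin θ) with ha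
  have hre : ∀ θ, (a θ).re ≤ -(c - q) := by
    intro θ
    simp [ha, -ofReal_cos, -ofReal_sin]
    nlinarith [Real.cos_le_one θ]
  have hac : Continuous a := by fun_prop
  have h1 : ∀ p ∈ polarCoord.target, (p.1 • (exp (((q:ℂ) + U * I) * (polarCoord.symm p).1 + V * I * (polarCoord.symm p).2 - c * Real.sqrt ((polarCoord.symm p).1 ^ 2 + (polarCoord.symm p).2 ^ 2)) /
      (Real.sqrt ((polarCoord.symm p).1 ^ 2 + (polarCoord.symm p).2 ^ 2) : ℂ)) : ℂ) = exp (a p.2 * p.1) := by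
    rintro ⟨r, θ⟩ ⟨hr, hθ⟩
    have hr' : 0 < r := hr
    have : (r * Real.cos θ)^2 + (r * Real.sin θ)^2 = r^2 := by
      linear_combination r^2 * Real.cos_sq_add_sin_sq θ
    have hr0 : (r : ℂ) ≠ 0 := by exact_mod_cast hr'.ne'
    simp only [polarCoord_symm_apply, this, Real.sqrt_sq hr'.le, real_smul]
    rw [mul_div_cancel₀ _ hr0]
    congr 1
    simp only [ha]
    push_cast
    ring
  rw [setIntegral_congr_fun polarCoord.open_target.measurableSet h1, polarCoord_target,
    Measure.volume_eq_prod, ← Measure.prod_restrict, integral_prod_symm]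
  · have : ∀ θ, ∫ r in Set.Ioi (0:ℝ), exp (a θ * r) = 
        1 / ((c:ℂ) - ((q:ℂ) + U * I) * Real.cos θ - V * I * Real.sin θ) := by
      intro θ
      rw [integral_exp_mul_complex_Ioi (by linarith [hre θ])]
      simp [ha, -neg_sub, neg_div_neg_eq]
    simp_rw [this]
    rw [← integral_Ioc_eq_integral_Ioo, ← intervalIntegral.integral_of_le (by linarith [Real.pi_pos])]
    exact aux_theta2 c q U V S hq hc hS hS2
  · have hi : Integrable (fun z : ℝ × ℝ => Real.exp (-(c - q) * z.1) * (1:ℝ))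
      ((volume.restrict (Set.Ioi 0)).prod (volume.restrict (Set.Ioo (-Real.pi) Real.pi))) :=
      Integrable.mul_prod (f := fun r : ℝ => Real.exp (-(c - q) * r)) (g := fun _ => (1:ℝ))
        (integrableOn_exp_mul_Ioi (by linarith) 0) (integrable_const _)
    refine hi.mono' (Continuous.aestronglyMeasurable (by fun_prop)) ?_
    rw [Measure.prod_restrict]
    refine (ae_restrict_iff' (measurableSet_Ioi.prod measurableSet_Ioo)).2 (Filter.Eventually.of_forall ?_)
    rintro ⟨r, θ⟩ ⟨hr, hθ⟩
    have hr' : 0 < r := hr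
    rw [norm_exp, mul_one]
    apply Real.exp_le_exp.2
    simp only [mul_re, ofReal_re, ofReal_im, mul_zero, sub_zero]
    exact mul_le_mul_of_nonneg_right (hre θ) hr'.le

lemma aux_lin (g : ℝ × ℝ → ℂ) :
    ∫ p, g p = (1 / (2 * Real.sqrt 2) : ℝ) • ∫ p : ℝ × ℝ,
      g ((1 / 2) * p.1 + (1 / (2 * Real.sqrt 2)) * p.2, (1 / 2) * p.1 + (-(1 / (2 * Real.sqrt 2))) * p.2) := by
  have h2 : 0 < Real.sqrt 2 := by positivity
  set k := 1 / (2 * Real.sqrt 2) with hk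
  have hk0 : 0 < k := by positivity
  set M : Matrix (Fin 2) (Fin 2) ℝ := !![1/2, k; 1/2, -k] with hM
  set L : ℝ × ℝ →L[ℝ] ℝ × ℝ := (Matrix.toLin (.finTwoProd ℝ) (.finTwoProd ℝ) M).toContinuousLinearMap with hL
  have hLa : ∀ p, L p = ((1 / 2) * p.1 + k * p.2, (1 / 2) * p.1 + (-k) * p.2) := by
    intro p
    rw [hL, hM, Matrix.toLin_finTwoProd_toContinuousLinearMap]
    simp
  have hdet : L.det = -k := by
    simp only [hL, hM, LinearMap.det_toContinuousLinearMap, LinearMap.det_toLin,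
      Matrix.det_fin_two_of]
    ring
  have hinj : Set.InjOn L Set.univ := by
    rintro ⟨x, y⟩ _ ⟨x', y'⟩ _ h
    rw [hLa, hLa] at h
    simp only [Prod.mk.injEq] at h ⊢
    obtain ⟨h1, h3⟩ := h
    refine ⟨by linarith, ?_⟩
    have : k * y = k * y' := by linarith
    exact mul_left_cancel₀ hk0.ne' this
  have him : L '' Set.univ = Set.univ := by
    rw [Set.image_univ, Set.range_eq_univ]
    rintro ⟨x, y⟩
    refine ⟨(x + y, (x - y) / (2 * k)), ?_⟩
    rw [hLa]
    ext <;> simp <;> field_simp <;> ring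
  have := integral_image_eq_integral_abs_det_fderiv_smul volume (s := Set.univ) (f := L) (f' := fun _ => L)
    MeasurableSet.univ (fun x _ => L.hasFDerivAt.hasFDerivWithinAt) hinj g
  rw [him, setIntegral_univ, setIntegral_univ, hdet, abs_neg, abs_of_pos hk0, integral_smul] at this
  rw [this]
  simp_rw [hLa]

theorem general_fourier_transform_F (u v : ℝ) :
    (1 / (2 * (Real.pi : ℂ))) *
      ∫ p : ℝ × ℝ,
        Complex.exp ((1 / 4) * ((1 + 4 * Complex.I * u) * (p.1 : ℂ) +
            (1 + 4 * Complex.I * v) * (p.2 : ℂ) -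
            (Real.sqrt 3 : ℂ) *
              (Real.sqrt (3 * p.1 ^ 2 - 2 * p.1 * p.2 + 3 * p.2 ^ 2) : ℂ))) /
          (Real.sqrt (3 * p.1 ^ 2 - 2 * p.1 * p.2 + 3 * p.2 ^ 2) : ℂ) =
    (((u : ℂ) - Complex.I) * (3 * (u : ℂ) + Complex.I) +
        ((v : ℂ) - Complex.I) * (3 * (v : ℂ) + Complex.I) +
        2 * (u : ℂ) * (v : ℂ) - 1) ^ (-(1 / 2) : ℂ) := by
  have h2 : 0 < Real.sqrt 2 := by positivity
  have h22 : Real.sqrt 2 ^ 2 = 2 := Real.sq_sqrt (by norm_num)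
  have h33 : Real.sqrt 3 ^ 2 = 3 := Real.sq_sqrt (by norm_num)
  have h22c : (Real.sqrt 2 : ℂ) ^ 2 = 2 := by exact_mod_cast h22
  have h33c : (Real.sqrt 3 : ℂ) ^ 2 = 3 := by exact_mod_cast h33
  have h2c : (Real.sqrt 2 : ℂ) ≠ 0 := by exact_mod_cast h2.ne'
  have hD : (((u : ℂ) - Complex.I) * (3 * (u : ℂ) + Complex.I) +
        ((v : ℂ) - Complex.I) * (3 * (v : ℂ) + Complex.I) +
        2 * (u : ℂ) * (v : ℂ) - 1) =
      ((3 * u ^ 2 + 3 * v ^ 2 + 2 * u * v + 1 : ℝ) : ℂ) + ((-2 * (u + v) : ℝ) : ℂ) * I := by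
    push_cast
    linear_combination (-2 : ℂ) * I_sq
  rw [hD]
  set D : ℂ := ((3 * u ^ 2 + 3 * v ^ 2 + 2 * u * v + 1 : ℝ) : ℂ) + ((-2 * (u + v) : ℝ) : ℂ) * I with hDD
  have hDre : 0 < D.re := by
    simp only [hDD, add_re, ofReal_re, re_ofReal_mul, I_re, mul_zero, add_zero]
    nlinarith [sq_nonneg (u + v), sq_nonneg u, sq_nonneg v]
  have hD0 : D ≠ 0 := by intro h; rw [h] at hDre; simp at hDre
  set T : ℂ := D ^ (1 / 2 : ℂ) with hT
  have hT2 : T ^ 2 = D := by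
    rw [hT, ← cpow_nat_mul]; norm_num
  have hT0 : T ≠ 0 := by intro h; rw [h] at hT2; exact hD0 (by rw [← hT2]; norm_num)
  have hTre : 0 < T.re := by
    have harg := Complex.abs_arg_lt_pi_div_two_iff.2 (Or.inl hDre)
    rw [abs_lt] at harg
    rw [hT, cpow_def_of_ne_zero hD0, exp_re]
    apply mul_pos (Real.exp_pos _)
    have : (log D * (1 / 2 : ℂ)).im = D.arg / 2 := by
      rw [show (1 / 2 : ℂ) = ((1 / 2 : ℝ) : ℂ) by norm_num, im_mul_ofReal, log_im]; ring
    rw [this]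
    apply Real.cos_pos_of_mem_Ioo
    constructor <;> linarith [harg.1, harg.2, Real.pi_pos]
  rw [show (-(1 / 2) : ℂ) = -(1 / 2 : ℂ) by rfl, cpow_neg, ← hT, aux_lin]
  have hpol := aux_polar (Real.sqrt 3 / 4) (1 / 4) ((u + v) / 2) ((u - v) / (2 * Real.sqrt 2))
    (T / (2 * Real.sqrt 2)) (by norm_num) (by
      have : (1:ℝ) < Real.sqrt 3 := by
        rw [Real.lt_sqrt] <;> norm_num
      linarith) (by
      rw [show (2 * Real.sqrt 2 : ℂ) = ((2 * Real.sqrt 2 : ℝ) : ℂ) by push_cast; rfl, div_ofReal_re]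
      positivity) (by
      rw [div_pow, hT2, hDD]
      push_cast
      field_simp
      rw [h33c, h22c]
      ring_nf
      simp only [I_sq]
      ring)
  have hint : ∀ p : ℝ × ℝ, Complex.exp ((1 / 4) * ((1 + 4 * Complex.I * u) * (((1 / 2) * p.1 + (1 / (2 * Real.sqrt 2)) * p.2 : ℝ) : ℂ) +
            (1 + 4 * Complex.I * v) * (((1 / 2) * p.1 + (-(1 / (2 * Real.sqrt 2))) * p.2 : ℝ) : ℂ) -
            (Real.sqrt 3 : ℂ) *
              (Real.sqrt (3 * ((1 / 2) * p.1 + (1 / (2 * Real.sqrt 2)) * p.2) ^ 2 - 2 * ((1 / 2) * p.1 + (1 / (2 * Real.sqrt 2)) * p.2) * ((1 / 2) * p.1 + (-(1 / (2 * Real.sqrt 2))) * p.2) + 3 * ((1 / 2) * p.1 + (-(1 / (2 * Real.sqrt 2))) * p.2) ^ 2) : ℂ))) /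
          (Real.sqrt (3 * ((1 / 2) * p.1 + (1 / (2 * Real.sqrt 2)) * p.2) ^ 2 - 2 * ((1 / 2) * p.1 + (1 / (2 * Real.sqrt 2)) * p.2) * ((1 / 2) * p.1 + (-(1 / (2 * Real.sqrt 2))) * p.2) + 3 * ((1 / 2) * p.1 + (-(1 / (2 * Real.sqrt 2))) * p.2) ^ 2) : ℂ) =
      exp ((((1 / 4 : ℝ) : ℂ) + ((u + v) / 2 : ℝ) * I) * p.1 + ((u - v) / (2 * Real.sqrt 2) : ℝ) * I * p.2 - (Real.sqrt 3 / 4 : ℝ) * Real.sqrt (p.1 ^ 2 + p.2 ^ 2)) /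
      (Real.sqrt (p.1 ^ 2 + p.2 ^ 2) : ℂ) := by
    rintro ⟨x, y⟩
    have hQ : 3 * ((1 / 2) * x + (1 / (2 * Real.sqrt 2)) * y) ^ 2 - 2 * ((1 / 2) * x + (1 / (2 * Real.sqrt 2)) * y) * ((1 / 2) * x + (-(1 / (2 * Real.sqrt 2))) * y) + 3 * ((1 / 2) * x + (-(1 / (2 * Real.sqrt 2))) * y) ^ 2 = x ^ 2 + y ^ 2 := by
      have : (1 / (2 * Real.sqrt 2)) ^ 2 = 1 / 8 := by
        rw [div_pow, mul_pow, h22]; norm_num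
      linear_combination (8 * y ^ 2) * this
    simp only [hQ]
    congr 2
    push_cast
    field_simp
    ring
  simp_rw [hint, hpol, real_smul]
  have hpi : (Real.pi : ℂ) ≠ 0 := by exact_mod_cast Real.pi_ne_zero
  push_cast
  field_simp
end

section
/- For all real numbers u and v, (1/(4√3·π)) · ∫_{ℝ²} exp((1/4)·((1 + 4iu)·x + (1 + 4iv)·y − √3·√(3x² − 2xy + 3y²))) dx dy = ((u − i)(3u + i) + (v − i)(3v + i) + 2uv − 1)^(−3/2), where the complex power is taken with the principal branch. -/
open MeasureTheory
open Set (Ioi InjOn univ mem_image image eq_univ_of_forall)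

lemma half_int (k : ℝ) (hk : 0 ≤ k) :
    IntegrableOn (fun x : ℝ => Real.exp (-x^2 - k^2 / x^2)) (Ioi 0) ∧
    ∫ x in Ioi (0:ℝ), Real.exp (-x^2 - k^2 / x^2) = Real.sqrt Real.pi / 2 * Real.exp (-2 * k) := by
  rcases hk.eq_or_lt with rfl | hk
  · have h1 := integral_gaussian_Ioi 1
    have h2 := (integrable_exp_neg_mul_sq (b := 1) one_pos).integrableOn (s := Ioi 0)
    simp at h1 h2 ⊢
    exact ⟨h2, h1⟩
  have hd : ∀ x ∈ Ioi (0:ℝ), HasDerivWithinAt (fun x : ℝ => x - k / x) (1 + k / x^2) (Ioi 0) x := by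
    intro x hx
    have hx' : x ≠ 0 := ne_of_gt hx
    have := ((hasDerivAt_id x).sub ((hasDerivAt_inv hx').const_mul k)).hasDerivWithinAt (s := Ioi 0)
    simp only [div_eq_mul_inv]
    refine HasDerivWithinAt.congr_deriv this ?_
    simp
  have hd2 : ∀ x ∈ Ioi (0:ℝ), HasDerivWithinAt (fun x : ℝ => k / x) (- (k / x^2)) (Ioi 0) x := by
    intro x hx
    have hx' : x ≠ 0 := ne_of_gt hx
    have := ((hasDerivAt_inv hx').const_mul k).hasDerivWithinAt (s := Ioi 0)
    simp only [div_eq_mul_inv]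
    refine HasDerivWithinAt.congr_deriv this ?_
    ring
  have hinj : InjOn (fun x : ℝ => x - k / x) (Ioi 0) := by
    apply StrictMonoOn.injOn
    intro x hx y hy hxy
    have : k / y < k / x := div_lt_div_of_pos_left hk hx hxy
    simp only
    linarith
  have hinj2 : InjOn (fun x : ℝ => k / x) (Ioi 0) := by
    intro x hx y hy hxy
    have hx' : x ≠ 0 := ne_of_gt hx
    have hy' : y ≠ 0 := ne_of_gt hy
    simp only at hxy
    field_simp at hxy
    exact hxy.symm
  have him : (fun x : ℝ => x - k / x) '' (Ioi 0) = univ := by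
    apply eq_univ_of_forall
    intro y
    have hs : Real.sqrt (y^2 + 4*k) ^ 2 = y^2+4*k := Real.sq_sqrt (by positivity)
    have hpos : 0 < y + Real.sqrt (y^2+4*k) := by
      have : |y| < Real.sqrt (y^2+4*k) := by
        rw [← Real.sqrt_sq_eq_abs]
        apply Real.sqrt_lt_sqrt <;> nlinarith [sq_nonneg y]
      linarith [neg_abs_le y]
    refine ⟨(y + Real.sqrt (y^2+4*k))/2, by simpa using hpos, ?_⟩
    simp only
    field_simp
    nlinarith
  have him2 : (fun x : ℝ => k / x) '' (Ioi 0) = Ioi 0 := by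
    ext y
    constructor
    · rintro ⟨x, hx, rfl⟩
      exact div_pos hk hx
    · intro hy
      have hy' : y ≠ 0 := ne_of_gt hy
      exact ⟨k / y, div_pos hk hy, by field_simp⟩
  have hg : Integrable (fun x : ℝ => Real.exp (-x^2)) := by
    simpa using integrable_exp_neg_mul_sq (b := 1) one_pos
  have hgi : ∫ x : ℝ, Real.exp (-x^2) = Real.sqrt Real.pi := by
    simpa using integral_gaussian 1
  have key : ∀ x ∈ Ioi (0:ℝ), |1 + k / x^2| • Real.exp (-(x - k/x)^2) =
      Real.exp (2*k) * (Real.exp (-x^2 - k^2 / x^2) + (k / x^2) * Real.exp (-x^2 - k^2 / x^2)) := by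
    intro x hx
    have hx' : x ≠ 0 := ne_of_gt hx
    have e : Real.exp (-(x - k/x)^2) = Real.exp (2*k) * Real.exp (-x^2 - k^2 / x^2) := by
      rw [← Real.exp_add]; congr 1; field_simp; ring
    rw [e, abs_of_pos (by positivity), smul_eq_mul]; ring
  have key2 : ∀ x ∈ Ioi (0:ℝ), |-(k / x^2)| • Real.exp (-(k/x)^2 - k^2/(k/x)^2) =
      (k / x^2) * Real.exp (-x^2 - k^2 / x^2) := by
    intro x hx
    have hx' : x ≠ 0 := ne_of_gt hx
    rw [abs_neg, abs_of_pos (by positivity), smul_eq_mul]; congr 2; field_simp; ring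
  have I1 := (integrableOn_image_iff_integrableOn_abs_deriv_smul measurableSet_Ioi hd hinj (fun x => Real.exp (-x^2))).1 (by rw [him]; exact hg.integrableOn)
  rw [integrableOn_congr_fun key measurableSet_Ioi] at I1
  have E1 := integral_image_eq_integral_abs_deriv_smul measurableSet_Ioi hd hinj (fun x => Real.exp (-x^2))
  rw [him, Measure.restrict_univ, hgi, setIntegral_congr_fun measurableSet_Ioi key, integral_const_mul] at E1
  have E2 := integral_image_eq_integral_abs_deriv_smul measurableSet_Ioi hd2 hinj2 (fun x => Real.exp (-x^2 - k^2 / x^2))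
  rw [him2, setIntegral_congr_fun measurableSet_Ioi key2] at E2
  have hmeas : Measurable (fun x : ℝ => Real.exp (-x^2 - k^2 / x^2)) := by fun_prop
  have I2 : IntegrableOn (fun x : ℝ => Real.exp (-x^2 - k^2 / x^2)) (Ioi 0) := by
    refine Integrable.mono' (g := fun x => Real.exp (-x^2)) hg.integrableOn hmeas.aestronglyMeasurable ?_
    refine Filter.Eventually.of_forall fun x => ?_
    rw [Real.norm_of_nonneg (Real.exp_pos _).le]
    apply Real.exp_le_exp.2
    have : 0 ≤ k^2/x^2 := by positivity
    linarith
  have I3 : IntegrableOn (fun x : ℝ => (k / x^2) * Real.exp (-x^2 - k^2 / x^2)) (Ioi 0) := by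
    rw [← integrableOn_congr_fun key2 measurableSet_Ioi]
    refine (integrableOn_image_iff_integrableOn_abs_deriv_smul measurableSet_Ioi hd2 hinj2 (fun x => Real.exp (-x^2 - k^2 / x^2))).1 ?_
    rw [him2]; exact I2
  refine ⟨I2, ?_⟩
  rw [integral_add I2 I3, ← E2] at E1
  rw [neg_mul, Real.exp_neg]
  have := Real.exp_pos (2*k)
  rw [E1]; field_simp; ring

lemma gauss2_s16 (A B : ℂ) (β : ℝ) (hβ : 0 < β) :
   ∫ y : ℝ, ∫ x : ℝ, Complex.exp (A * x + B * y - β * (3 * x^2 - 2 * x * y + 3*y^2)) =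
    ((Real.pi / (Real.sqrt 8 * β) : ℝ) : ℂ) * Complex.exp ((3*A^2+3*B^2+2*A*B) / (32 * β)) := by
  have hb : (β:ℂ) ≠ 0 := by exact_mod_cast hβ.ne'
  have h1 : ∀ y : ℝ, ∫ x : ℝ, Complex.exp (A * x + B * y - β * (3 * x^2 - 2 * x * y + 3*y^2)) =
     (Real.pi / (3 * β) : ℂ) ^ (1/2 : ℂ) * Complex.exp ((-(8 * β/3 : ℂ)) * y^2 + (B + A/3) * y + A^2/(12*β)) := by
    intro y
    have := integral_cexp_quadratic (b := -(3*β : ℂ)) (by simpa using hβ) (A + 2 * β * y) (B * y - 3 * β * y^2)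
    rw [neg_neg] at this
    convert this using 3
    · ring
    · congr 1; field_simp; ring
  simp_rw [h1]
  rw [integral_const_mul, integral_cexp_quadratic (by simpa using hβ), neg_neg, ← mul_assoc]
  congr 1
  · have e1 : (Real.pi / (3 * β) : ℂ) = ((Real.pi / (3*β) : ℝ) : ℂ) := by push_cast; rfl
    have e2 : (Real.pi / (8 * β / 3) : ℂ) = ((Real.pi / (8*β/3) : ℝ) : ℂ) := by push_cast; rfl
    have e3 : (1/2 : ℂ) = ((1/2 : ℝ) : ℂ) := by push_cast; rfl
    rw [e1, e2, e3, ← Complex.ofReal_cpow (by positivity), ← Complex.ofReal_cpow (by positivity),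
      ← Real.sqrt_eq_rpow, ← Real.sqrt_eq_rpow, ← Complex.ofReal_mul, ← Real.sqrt_mul (by positivity)]
    congr 1
    rw [Real.sqrt_eq_iff_mul_self_eq (by positivity) (by positivity)]
    have : Real.sqrt 8 ^ 2 = 8 := Real.sq_sqrt (by norm_num)
    field_simp
    rw [this]
  · congr 1; field_simp; ring


lemma pos_mul_cpow (r : ℝ) (hr : 0 < r) (z : ℂ) (hz : z ≠ 0) (c : ℂ) :
    ((r : ℂ) * z) ^ c = (r : ℂ) ^ c * z ^ c := by
  have hr' : (r : ℂ) ≠ 0 := by exact_mod_cast hr.ne'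
  rw [Complex.cpow_def_of_ne_zero (mul_ne_zero hr' hz), Complex.cpow_def_of_ne_zero hr',
    Complex.cpow_def_of_ne_zero hz, Complex.log_ofReal_mul hr hz, Complex.ofReal_log hr.le,
    add_mul, Complex.exp_add]

lemma gamma2 (W : ℂ) (hW : 0 < W.re) :
   ∫ s in Ioi (0:ℝ), (s:ℂ)^2 * Complex.exp (-W * (s:ℂ)^2) = (Real.sqrt Real.pi / 4 : ℝ) * W ^ (-(3/2) : ℂ) := by
  have hW0 : W ≠ 0 := by rintro rfl; simp at hW
  have i0 := (integrable_cexp_neg_mul_sq hW).integrableOn (s := Ioi 0)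
  have i1 := (integrable_mul_cexp_neg_mul_sq hW).integrableOn (s := Ioi 0)
  have i2 : IntegrableOn (fun s : ℝ => (s:ℂ)^2 * Complex.exp (-W * (s:ℂ)^2)) (Ioi 0) := by
    have h := (integrable_rpow_mul_exp_neg_mul_sq hW (s := 2) (by norm_num)).integrableOn (s := Ioi 0)
    refine Integrable.mono' h (by fun_prop) ?_
    refine Filter.Eventually.of_forall fun s => ?_
    rw [norm_mul, norm_cexp_neg_mul_sq]
    simp
  have hd : ∀ x : ℝ, HasDerivAt (fun s : ℝ => (s:ℂ) * Complex.exp (-W * (s:ℂ)^2))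
      (Complex.exp (-W * (x:ℂ)^2) - 2 * W * ((x:ℂ)^2 * Complex.exp (-W * (x:ℂ)^2))) x := by
    intro x
    have h1 : HasDerivAt (fun z : ℂ => z * Complex.exp (-W * z^2))
      (Complex.exp (-W * (x:ℂ)^2) - 2 * W * ((x:ℂ)^2 * Complex.exp (-W * (x:ℂ)^2))) (x:ℂ) := by
      have := (hasDerivAt_id (x:ℂ)).mul ((((hasDerivAt_id (x:ℂ)).pow 2).const_mul (-W)).cexp)
      refine HasDerivAt.congr_deriv this ?_
      simp; ring
    exact h1.comp_ofReal
  have i3 := i0.sub (i2.const_mul (2 * W))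
  have ht := tendsto_zero_of_hasDerivAt_of_integrableOn_Ioi (a := 0) (fun x _ => hd x) i3 i1
  have he := integral_Ioi_of_hasDerivAt_of_tendsto' (a := 0) (fun x _ => hd x) i3 ht
  rw [integral_sub i0 (i2.const_mul _), integral_const_mul, integral_gaussian_complex_Ioi hW] at he
  have harg : W.arg ≠ Real.pi := by
    intro h; rw [Complex.arg_eq_pi_iff] at h; linarith [h.1]
  have e : ((Real.pi:ℂ) / W) ^ (1/2 : ℂ) = (Real.sqrt Real.pi : ℝ) * (W ^ (1/2:ℂ))⁻¹ := by
    rw [div_eq_mul_inv, pos_mul_cpow _ Real.pi_pos _ (inv_ne_zero hW0), Complex.inv_cpow _ _ harg,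
      Real.sqrt_eq_rpow, Complex.ofReal_cpow Real.pi_pos.le]
    push_cast; rfl
  have e2 : W ^ (-(3/2) : ℂ) = W⁻¹ * (W ^ (1/2:ℂ))⁻¹ := by
    rw [show (-(3/2) : ℂ) = -1 + -(1/2) by norm_num, Complex.cpow_add _ _ hW0, Complex.cpow_neg_one, Complex.cpow_neg]
  rw [e] at he
  rw [e2]
  push_cast at he ⊢
  simp only [zero_mul, sub_zero] at he
  rw [sub_eq_iff_eq_add] at he
  set J := ∫ s in Ioi (0:ℝ), (s:ℂ)^2 * Complex.exp (-W * (s:ℂ)^2)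
  have : J = (2*W)⁻¹ * (2 * W * J) := by field_simp
  rw [this]
  simp only [zero_add] at he
  rw [← he, mul_inv]; ring

lemma Qlow (x y : ℝ) : |x| + |y| ≤ Real.sqrt (3 * x ^ 2 - 2 * x * y + 3 * y ^ 2) := by
  apply Real.le_sqrt_of_sq_le
  nlinarith [sq_abs x, sq_abs y, sq_nonneg (|x| - |y|), sq_nonneg (x - y)]

lemma int_abs : Integrable (fun x : ℝ => Real.exp (-(1/8) * |x|)) := by
  apply Integrable.of_integral_ne_zero
  rw [integral_comp_abs (f := fun x : ℝ => Real.exp (-(1/8) * x)), integral_exp_mul_Ioi (by norm_num)]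
  norm_num

lemma int_main : Integrable (fun p : ℝ × ℝ => Real.exp ((p.1 + p.2)/4) *
   Real.exp (-2 * (Real.sqrt 3 / 8 * Real.sqrt (3 * p.1 ^ 2 - 2 * p.1 * p.2 + 3 * p.2 ^ 2)))) := by
  refine Integrable.mono' (int_abs.mul_prod int_abs) (by fun_prop) ?_
  refine Filter.Eventually.of_forall fun p => ?_
  rw [← Real.exp_add, ← Real.exp_add, Real.norm_of_nonneg (Real.exp_pos _).le]
  apply Real.exp_le_exp.2
  have h := Qlow p.1 p.2
  have h3 : (3/2 : ℝ) ≤ Real.sqrt 3 := Real.le_sqrt_of_sq_le (by norm_num)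
  have h0 : 0 ≤ |p.1| + |p.2| := by positivity
  have := mul_le_mul h3 h h0 (by positivity)
  have a1 := le_abs_self p.1
  have a2 := le_abs_self p.2
  linarith

open Complex

theorem general_fourier_transform_G (u v : ℝ) :
    (1 / (4 * (Real.sqrt 3 : ℂ) * (Real.pi : ℂ))) *
      ∫ p : ℝ × ℝ,
        Complex.exp ((1 / 4) * ((1 + 4 * Complex.I * u) * (p.1 : ℂ) +
            (1 + 4 * Complex.I * v) * (p.2 : ℂ) -
            (Real.sqrt 3 : ℂ) *
              (Real.sqrt (3 * p.1 ^ 2 - 2 * p.1 * p.2 + 3 * p.2 ^ 2) : ℂ))) =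
    (((u : ℂ) - Complex.I) * (3 * (u : ℂ) + Complex.I) +
        ((v : ℂ) - Complex.I) * (3 * (v : ℂ) + Complex.I) +
        2 * (u : ℂ) * (v : ℂ) - 1) ^ (-(3 / 2) : ℂ) := by
  set A : ℂ := 1/4 + I * u with hA
  set B : ℂ := 1/4 + I * v with hB
  set Z : ℂ := ((u : ℂ) - Complex.I) * (3 * (u : ℂ) + Complex.I) +
        ((v : ℂ) - Complex.I) * (3 * (v : ℂ) + Complex.I) +
        2 * (u : ℂ) * (v : ℂ) - 1 with hZ
  let k : ℝ × ℝ → ℝ := fun p => Real.sqrt 3 / 8 * Real.sqrt (3 * p.1 ^ 2 - 2 * p.1 * p.2 + 3 * p.2 ^ 2)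
  have hkm : Measurable k := by fun_prop
  have hk0 : ∀ p, 0 ≤ k p := fun p => by positivity
  have hk2 : ∀ p, k p ^ 2 = 3/64 * (3 * p.1 ^ 2 - 2 * p.1 * p.2 + 3 * p.2 ^ 2) := by
    intro p
    rw [mul_pow, div_pow, Real.sq_sqrt (by norm_num), Real.sq_sqrt (by nlinarith [sq_nonneg (p.1 - p.2), sq_nonneg p.1, sq_nonneg p.2])]
    ring
  let F : ℝ × ℝ → ℝ → ℂ := fun p s => Complex.exp (A * p.1 + B * p.2) * (Real.exp (-s^2 - k p ^ 2 / s^2) : ℝ)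
  have hFm : Measurable (Function.uncurry F) := by
    simp only [F, Function.uncurry_def]
    fun_prop
  have hnorm : ∀ p s, ‖F p s‖ = Real.exp ((p.1+p.2)/4) * Real.exp (-s^2 - k p ^ 2 / s^2) := by
    intro p s
    simp only [F, norm_mul, Complex.norm_real, Real.norm_of_nonneg (Real.exp_pos _).le]
    rw [Complex.norm_exp]
    congr 2
    simp [hA, hB]; ring
  have hFi : Integrable (Function.uncurry F) ((volume : Measure (ℝ × ℝ)).prod (volume.restrict (Ioi (0:ℝ)))) := by
    rw [integrable_prod_iff hFm.aestronglyMeasurable]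
    constructor
    · refine Filter.Eventually.of_forall fun p => ?_
      exact ((half_int (k p) (hk0 p)).1.ofReal (𝕜 := ℂ)).const_mul (Complex.exp (A * p.1 + B * p.2))
    · simp only [Function.uncurry_apply_pair, hnorm]
      simp_rw [integral_const_mul, (half_int (k _) (hk0 _)).2]
      refine (int_main.const_mul (Real.sqrt Real.pi / 2)).congr (Filter.Eventually.of_forall fun p => ?_)
      simp only [k]; ring
  have hswap := integral_integral_swap hFi
  have hL : ∀ p : ℝ × ℝ, ∫ s in Ioi (0:ℝ), F p s = ((Real.sqrt Real.pi / 2 : ℝ) : ℂ) * Complex.exp ((1 / 4) * ((1 + 4 * Complex.I * u) * (p.1 : ℂ) +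
            (1 + 4 * Complex.I * v) * (p.2 : ℂ) -
            (Real.sqrt 3 : ℂ) *
              (Real.sqrt (3 * p.1 ^ 2 - 2 * p.1 * p.2 + 3 * p.2 ^ 2) : ℂ))) := by
    intro p
    simp only [F]
    rw [integral_const_mul, integral_complex_ofReal, (half_int (k p) (hk0 p)).2, Complex.ofReal_mul, mul_left_comm,
      Complex.ofReal_exp, ← Complex.exp_add]
    congr 2
    simp only [k, hA, hB]; push_cast; ring
  simp_rw [hL] at hswap
  rw [integral_const_mul] at hswap
  have hZW : (2/3 : ℂ) * Z = 1 - (2/3) * (3*A^2+3*B^2+2*A*B) := by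
    simp only [hZ, hA, hB]; ring_nf; rw [Complex.I_sq]; ring
  have hZre : 0 < Z.re := by
    have : Z.re = 3*u^2+3*v^2+2*u*v+1 := by
      simp [hZ]; ring
    rw [this]; nlinarith [sq_nonneg (u+v), sq_nonneg u, sq_nonneg v]
  have hR : ∀ᵐ s ∂(volume.restrict (Ioi (0:ℝ))), ∫ p, F p s = ((64 * Real.pi / (3 * Real.sqrt 8) : ℝ) : ℂ) * ((s:ℂ)^2 * Complex.exp (-((2/3:ℂ) * Z) * (s:ℂ)^2)) := by
    filter_upwards [hFi.prod_left_ae, ae_restrict_mem measurableSet_Ioi] with s hs hs0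
    have hs0 : 0 < s := hs0
    have hsc : (s:ℂ) ≠ 0 := by exact_mod_cast hs0.ne'
    have hF : ∀ p, F p s = Complex.exp (-(s:ℂ)^2) * Complex.exp (A * p.1 + B * p.2 - ((3/(64*s^2) : ℝ):ℂ) * (3 * (p.1:ℂ)^2 - 2 * p.1 * p.2 + 3*(p.2:ℂ)^2)) := by
      intro p
      simp only [F]
      rw [hk2, Complex.ofReal_exp, ← Complex.exp_add, ← Complex.exp_add]
      congr 1; push_cast; field_simp; ring
    simp only [Function.uncurry_apply_pair] at hs
    rw [Measure.volume_eq_prod, integral_prod_symm _ hs]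
    simp_rw [hF]
    simp_rw [integral_const_mul]
    rw [gauss2_s16 A B _ (by positivity), mul_left_comm, ← Complex.exp_add, ← mul_assoc]
    congr 1
    · push_cast; field_simp
    · congr 1; rw [hZW]; push_cast; field_simp; ring
  rw [integral_congr_ae hR, integral_const_mul, gamma2 _ (by simpa using hZre)] at hswap
  have hc : ((2/3:ℂ) * Z) ^ (-(3/2) : ℂ) = ((Real.sqrt 8 * 3 * Real.sqrt 3 / 8 : ℝ) : ℂ) * Z ^ (-(3/2) : ℂ) := by
    have e0 : (2/3 : ℂ) = ((2/3 : ℝ) : ℂ) := by push_cast; rfl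
    rw [e0, pos_mul_cpow _ (by norm_num) _ (by intro h; simp [h] at hZre)]
    congr 1
    have e1 : (-(3/2) : ℂ) = ((-(3/2) : ℝ) : ℂ) := by push_cast; rfl
    rw [e1, ← Complex.ofReal_cpow (by norm_num)]
    congr 1
    rw [show (-(3/2) : ℝ) = -1 + -(1/2) by norm_num, Real.rpow_add (by norm_num), Real.rpow_neg_one,
      Real.rpow_neg (by norm_num), ← Real.sqrt_eq_rpow, ← Real.sqrt_inv]
    rw [show (2/3:ℝ)⁻¹ = (8 * 3) / 4^2 by norm_num, Real.sqrt_div (by norm_num), Real.sqrt_mul (by norm_num),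
      Real.sqrt_sq (by norm_num)]
    ring
  rw [hc] at hswap
  have hpi : ((Real.sqrt Real.pi : ℝ) : ℂ) ≠ 0 := by
    exact_mod_cast (Real.sqrt_pos.2 Real.pi_pos).ne'
  have hpi2 : ((Real.pi : ℝ) : ℂ) ≠ 0 := by exact_mod_cast Real.pi_pos.ne'
  have h8 : ((Real.sqrt 8 : ℝ) : ℂ) ≠ 0 := by
    exact_mod_cast (Real.sqrt_pos.2 (by norm_num : (0:ℝ) < 8)).ne'
  have h3 : ((Real.sqrt 3 : ℝ) : ℂ) ≠ 0 := by
    exact_mod_cast (Real.sqrt_pos.2 (by norm_num : (0:ℝ) < 3)).ne'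
  push_cast at hswap
  apply mul_left_cancel₀ (mul_ne_zero hpi (mul_ne_zero h3 hpi2))
  field_simp at hswap ⊢
  linear_combination (1/32) * hswap
end
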